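/- Let S_P ∈ ℝ^{Ω×Ω} be defined by S_P(x,y) := √(π(x))·P(x,y)/√(π(y)), and suppose ρ ≥ 0 is such that ‖S_P u‖_2 ≤ ρ·‖u‖_2 for every u ∈ ℝ^{Ω} with Σ_x √(π(x))·u(x) = 0. Then for every integer t ≥ 1 and every family of real d×d matrices (W_x)_{x∈Ω}: ‖ Σ_{x,y∈Ω} ( (P^t)(y,x) − π(x) )·π(y)·W_x·W_yᵀ ‖_2 ≤ ρ^t · ‖ Σ_{x∈Ω} π(x)·W_x·W_xᵀ ‖_2. -/

import Mathlib

/-!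
Put `s = √π` and `S = symTrans P pi'`. Then `S s = s`, `S` preserves `s^⊥` (stationarity of `π`),
and `s` is a unit vector, so `S ^ t - s sᵀ` annihilates `s` and has norm at most `ρ ^ t`
(`bilin_bound`).

Write `A` for the matrix on the left. Since
`((P ^ t) y x - π x) π y = √π y (S ^ t - s sᵀ) y x √π x`, the number `a ⬝ᵥ A *ᵥ v` is a sum over
the coordinates `i` of `g i ⬝ᵥ (S ^ t - s sᵀ) *ᵥ f i`, where `f i x = √π x (W xᵀ a) i` and
`g i y = √π y (W yᵀ v) i` (`dot_corr`). As `∑ i, ‖f i‖² = a ⬝ᵥ N *ᵥ a` for `N = ∑ x, π x W x W xᵀ`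
(`dot_gram`), and likewise for `g` and `v`, Cauchy–Schwarz over `i` gives
`a ⬝ᵥ A *ᵥ v ≤ ρ ^ t ‖N‖ ‖a‖ ‖v‖`; the choice `a = A *ᵥ v` finishes the proof.
-/

set_option autoImplicit false

open Matrix

/-- Euclidean (ℓ₂) norm of a finite real vector. -/
noncomputable def euclNorm {ι : Type*} [Fintype ι] (v : ι → ℝ) : ℝ :=
  Real.sqrt (∑ i, v i ^ 2)

/-- Spectral (ℓ₂ operator) norm of a real matrix: the supremum of `‖M v‖₂` over
unit vectors `v`. -/
noncomputable def specNorm {ι κ : Type*} [Fintype ι] [Fintype κ] (M : Matrix ι κ ℝ) : ℝ :=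
  sSup {r : ℝ | ∃ v : κ → ℝ, euclNorm v = 1 ∧ r = euclNorm (M.mulVec v)}

/-- The symmetrized transition matrix `S_P(x,y) = √π(x)·P(x,y)/√π(y)`. -/
noncomputable def symTrans {S : Type*} (P : Matrix S S ℝ) (pi' : S → ℝ) : Matrix S S ℝ :=
  Matrix.of fun x y => Real.sqrt (pi' x) * P x y / Real.sqrt (pi' y)

section EuclNorm

variable {ι κ : Type*} [Fintype ι] [Fintype κ]

theorem euclNorm_nonneg (v : ι → ℝ) : 0 ≤ euclNorm v := Real.sqrt_nonneg _

theorem euclNorm_sq (v : ι → ℝ) : euclNorm v ^ 2 = v ⬝ᵥ v := by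
  rw [euclNorm, Real.sq_sqrt (Finset.sum_nonneg fun i _ => sq_nonneg _)]
  simp [dotProduct, sq]

theorem dot_le_euclNorm (v w : ι → ℝ) : v ⬝ᵥ w ≤ euclNorm v * euclNorm w :=
  Real.sum_mul_le_sqrt_mul_sqrt _ _ _

theorem euclNorm_smul (c : ℝ) (v : ι → ℝ) : euclNorm (c • v) = |c| * euclNorm v := by
  rw [← abs_of_nonneg (euclNorm_nonneg v), ← abs_mul, ← abs_of_nonneg (euclNorm_nonneg (c • v)),
    ← sq_eq_sq_iff_abs_eq_abs, mul_pow, euclNorm_sq, euclNorm_sq]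
  simp [sq, mul_assoc]

theorem specNorm_nonneg (M : Matrix ι κ ℝ) : 0 ≤ specNorm M := by
  apply Real.sSup_nonneg
  rintro r ⟨v, -, rfl⟩
  exact euclNorm_nonneg _

/-- The Frobenius norm bounds the set defining `specNorm`, so that its supremum is a genuine one. -/
theorem specNorm_bddAbove (M : Matrix ι κ ℝ) :
    BddAbove {r : ℝ | ∃ v : κ → ℝ, euclNorm v = 1 ∧ r = euclNorm (M.mulVec v)} := by
  refine ⟨Real.sqrt (∑ i, ∑ j, M i j ^ 2), ?_⟩
  rintro r ⟨v, hv, rfl⟩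
  have hv2 : ∑ j, v j ^ 2 = 1 := by
    have := euclNorm_sq v
    rw [hv] at this
    simpa [dotProduct, sq] using this.symm
  apply Real.sqrt_le_sqrt
  refine Finset.sum_le_sum fun i _ => ?_
  have := Finset.sum_mul_sq_le_sq_mul_sq Finset.univ (fun j => M i j) v
  rw [hv2, mul_one] at this
  exact this

theorem euclNorm_mulVec_le (M : Matrix ι κ ℝ) (v : κ → ℝ) :
    euclNorm (M *ᵥ v) ≤ specNorm M * euclNorm v := by
  rcases (euclNorm_nonneg v).eq_or_lt with h | h
  · have h0 : v = 0 := by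
      have h2 := euclNorm_sq v
      rw [← h] at h2
      exact dotProduct_self_eq_zero.1 (by simpa using h2.symm)
    subst h0
    simp [euclNorm]
  · have h1 : euclNorm (M *ᵥ ((euclNorm v)⁻¹ • v)) ≤ specNorm M := by
      refine le_csSup (specNorm_bddAbove M) ⟨_, ?_, rfl⟩
      rw [euclNorm_smul, abs_of_pos (inv_pos.2 h), inv_mul_cancel₀ h.ne']
    rwa [mulVec_smul, euclNorm_smul, abs_of_pos (inv_pos.2 h), inv_mul_le_iff₀ h, mul_comm] at h1

theorem dot_mulVec_le (M : Matrix ι ι ℝ) (v : ι → ℝ) :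
    v ⬝ᵥ M *ᵥ v ≤ specNorm M * euclNorm v ^ 2 := by
  have h1 := dot_le_euclNorm v (M *ᵥ v)
  have h2 := mul_le_mul_of_nonneg_left (euclNorm_mulVec_le M v) (euclNorm_nonneg v)
  linarith

/-- It suffices to bound the bilinear form of a square matrix: take `a = M *ᵥ v`. -/
theorem specNorm_le_of_bilin (M : Matrix ι ι ℝ) (C : ℝ) (hC : 0 ≤ C)
    (h : ∀ a v : ι → ℝ, a ⬝ᵥ M *ᵥ v ≤ C * (euclNorm a * euclNorm v)) : specNorm M ≤ C := by
  refine Real.sSup_le ?_ hC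
  rintro r ⟨v, hv, rfl⟩
  have h1 := h (M *ᵥ v) v
  rw [← euclNorm_sq, hv, mul_one, sq] at h1
  rcases (euclNorm_nonneg (M *ᵥ v)).eq_or_lt with h0 | h0
  · rw [← h0]; exact hC
  · exact le_of_mul_le_mul_right h1 h0

end EuclNorm

section Chain

variable {S : Type*} [Fintype S]

theorem symTrans_pow [DecidableEq S] (P : Matrix S S ℝ) (pi' : S → ℝ) (hpos : ∀ x, 0 < pi' x) (n : ℕ) (x y : S) :
    (symTrans P pi' ^ n) x y = √(pi' x) * (P ^ n) x y / √(pi' y) := by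
  have hs : ∀ x, √(pi' x) ≠ 0 := fun x => (Real.sqrt_pos.2 (hpos x)).ne'
  induction n generalizing x y with
  | zero =>
    by_cases h : x = y
    · subst h; simp [hs]
    · simp [h]
  | succ n ih =>
    rw [pow_succ, pow_succ, mul_apply, mul_apply, Finset.mul_sum, Finset.sum_div]
    refine Finset.sum_congr rfl fun z _ => ?_
    rw [ih, symTrans, of_apply]
    have := hs z
    have := hs y
    field_simp

/-- `S ^ n - s sᵀ` has norm at most `ρ ^ n` when the unit vector `s` is fixed by `S`, the
functional `s ⬝ᵥ ·` is `S`-invariant, and `S` has norm at most `ρ` on `s^⊥`. -/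
theorem bilin_bound [DecidableEq S] (T : Matrix S S ℝ) (s : S → ℝ) (ρ : ℝ) (hρ0 : 0 ≤ ρ) (hs1 : s ⬝ᵥ s = 1)
    (hTs : T *ᵥ s = s) (hsT : ∀ u, s ⬝ᵥ T *ᵥ u = s ⬝ᵥ u)
    (hρ : ∀ u, s ⬝ᵥ u = 0 → euclNorm (T *ᵥ u) ≤ ρ * euclNorm u) (n : ℕ) (f g : S → ℝ) :
    g ⬝ᵥ (T ^ n) *ᵥ f - (s ⬝ᵥ g) * (s ⬝ᵥ f) ≤ ρ ^ n * (euclNorm f * euclNorm g) := by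
  have hpow : ∀ (n : ℕ) (u : S → ℝ), s ⬝ᵥ u = 0 →
      s ⬝ᵥ (T ^ n) *ᵥ u = 0 ∧ euclNorm ((T ^ n) *ᵥ u) ≤ ρ ^ n * euclNorm u := by
    intro n u hu
    induction n with
    | zero => simp [hu]
    | succ n ih =>
      rw [pow_succ', ← mulVec_mulVec, hsT]
      refine ⟨ih.1, (hρ _ ih.1).trans ?_⟩
      rw [pow_succ', mul_assoc]
      exact mul_le_mul_of_nonneg_left ih.2 hρ0
  have hfix : (T ^ n) *ᵥ s = s := by
    induction n with
    | zero => simp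
    | succ n ih => rw [pow_succ, ← mulVec_mulVec, hTs, ih]
  -- the orthogonal projection of `f` to `s^⊥`
  set f' := f - (s ⬝ᵥ f) • s with hf'
  have h0 : s ⬝ᵥ f' = 0 := by simp [hf', dotProduct_sub, hs1]
  have hle : euclNorm f' ≤ euclNorm f := by
    refine le_of_sq_le_sq ?_ (euclNorm_nonneg f)
    have : f' ⬝ᵥ f' = f ⬝ᵥ f - (s ⬝ᵥ f) ^ 2 := by
      simp only [hf', dotProduct_sub, sub_dotProduct, smul_dotProduct, dotProduct_smul, hs1,
        smul_eq_mul, dotProduct_comm f s]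
      ring
    rw [euclNorm_sq, euclNorm_sq, this]
    linarith [sq_nonneg (s ⬝ᵥ f)]
  have heq : g ⬝ᵥ (T ^ n) *ᵥ f - (s ⬝ᵥ g) * (s ⬝ᵥ f) = g ⬝ᵥ (T ^ n) *ᵥ f' := by
    rw [hf', mulVec_sub, mulVec_smul, hfix, dotProduct_sub, dotProduct_smul, smul_eq_mul,
      dotProduct_comm g s, mul_comm (s ⬝ᵥ g)]
  rw [heq]
  calc g ⬝ᵥ (T ^ n) *ᵥ f' ≤ euclNorm g * euclNorm ((T ^ n) *ᵥ f') := dot_le_euclNorm _ _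
    _ ≤ euclNorm g * (ρ ^ n * euclNorm f) :=
        mul_le_mul_of_nonneg_left ((hpow n f' h0).2.trans
          (mul_le_mul_of_nonneg_left hle (pow_nonneg hρ0 n))) (euclNorm_nonneg g)
    _ = _ := by ring

/-- The `i`-th coordinates of the vectors `W xᵀ a`, weighted by `√π x`. -/
noncomputable def coordVec {S : Type*} {d : ℕ} (pi' : S → ℝ) (W : S → Matrix (Fin d) (Fin d) ℝ)
    (a : Fin d → ℝ) (i : Fin d) : S → ℝ :=
  fun x => √(pi' x) * ((W x)ᵀ *ᵥ a) i

theorem dot_mul_transpose {d : ℕ} (A B : Matrix (Fin d) (Fin d) ℝ) (a v : Fin d → ℝ) :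
    a ⬝ᵥ (A * Bᵀ) *ᵥ v = ∑ i, (Aᵀ *ᵥ a) i * (Bᵀ *ᵥ v) i := by
  rw [← mulVec_mulVec, dotProduct_mulVec, ← mulVec_transpose]
  rfl

theorem dot_gram {d : ℕ} (pi' : S → ℝ) (hpos : ∀ x, 0 < pi' x)
    (W : S → Matrix (Fin d) (Fin d) ℝ) (a : Fin d → ℝ) :
    ∑ i, euclNorm (coordVec pi' W a i) ^ 2 = a ⬝ᵥ (∑ x, pi' x • (W x * (W x)ᵀ)) *ᵥ a := by
  simp only [sum_mulVec, dotProduct_sum, smul_mulVec, dotProduct_smul, dot_mul_transpose,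
    euclNorm_sq, smul_eq_mul, Finset.mul_sum]
  simp only [dotProduct, coordVec]
  conv_rhs => rw [Finset.sum_comm]
  refine Finset.sum_congr rfl fun i _ => Finset.sum_congr rfl fun x _ => ?_
  rw [mul_mul_mul_comm, Real.mul_self_sqrt (hpos _).le]

/-- The bilinear form of the correlation sum, one coordinate at a time, in terms of
`S ^ t - s sᵀ` with `S = symTrans P pi'` and `s = √π`. -/
theorem dot_corr [DecidableEq S] {d : ℕ} (P : Matrix S S ℝ) (pi' : S → ℝ) (hpos : ∀ x, 0 < pi' x) (t : ℕ)
    (W : S → Matrix (Fin d) (Fin d) ℝ) (a v : Fin d → ℝ) :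
    a ⬝ᵥ (∑ x, ∑ y, (((P ^ t) y x - pi' x) * pi' y) • (W x * (W y)ᵀ)) *ᵥ v
      = ∑ i, (coordVec pi' W v i ⬝ᵥ (symTrans P pi' ^ t) *ᵥ coordVec pi' W a i
          - ((fun x => √(pi' x)) ⬝ᵥ coordVec pi' W v i)
            * ((fun x => √(pi' x)) ⬝ᵥ coordVec pi' W a i)) := by
  have key : ∀ p q : S → ℝ,
      (fun y => √(pi' y) * q y) ⬝ᵥ (symTrans P pi' ^ t) *ᵥ (fun x => √(pi' x) * p x)
          - ((fun x => √(pi' x)) ⬝ᵥ fun y => √(pi' y) * q y)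
            * ((fun x => √(pi' x)) ⬝ᵥ fun x => √(pi' x) * p x)
      = ∑ x, ∑ y, (((P ^ t) y x - pi' x) * pi' y) * (p x * q y) := by
    intro p q
    rw [Finset.sum_comm]
    simp only [dotProduct, mulVec, Finset.sum_mul_sum]
    rw [← Finset.sum_sub_distrib]
    refine Finset.sum_congr rfl fun y _ => ?_
    rw [Finset.mul_sum]
    rw [← Finset.sum_sub_distrib]
    refine Finset.sum_congr rfl fun x _ => ?_
    have hx : √(pi' x) ≠ 0 := (Real.sqrt_pos.2 (hpos x)).ne'
    have hx2 := Real.mul_self_sqrt (hpos x).le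
    have hy2 := Real.mul_self_sqrt (hpos y).le
    rw [symTrans_pow P pi' hpos]
    conv_rhs => rw [← hx2, ← hy2]
    field_simp
  refine Eq.trans ?_ (Finset.sum_congr rfl fun i _ =>
    key (fun x => ((W x)ᵀ *ᵥ a) i) (fun y => ((W y)ᵀ *ᵥ v) i)).symm
  simp only [sum_mulVec, dotProduct_sum, smul_mulVec, dotProduct_smul, dot_mul_transpose,
    smul_eq_mul, Finset.mul_sum]
  conv_rhs =>
    rw [Finset.sum_comm]
    enter [2, x]
    rw [Finset.sum_comm]

end Chain

/-- if `ρ ≥ 0` dominates the norm of `S_P` on the orthogonal complement of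
`√π`, then for every `t ≥ 1` and every family of real `d × d` matrices `(W_x)`,
`‖ Σ_{x,y} ((P^t)(y,x) − π(x))·π(y)·W_x·W_yᵀ ‖₂ ≤ ρ^t · ‖ Σ_x π(x)·W_x·W_xᵀ ‖₂`. -/
theorem specNorm_corr_sum_le_rho_pow {S : Type*} [Fintype S] [DecidableEq S] [Nonempty S]
    {d : ℕ} (P : Matrix S S ℝ) (pi' : S → ℝ)
    (hP0 : ∀ x y, 0 ≤ P x y) (hP1 : ∀ x, ∑ y, P x y = 1)
    (hpos : ∀ x, 0 < pi' x) (hsum : ∑ x, pi' x = 1)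
    (hrev : ∀ x y, pi' x * P x y = pi' y * P y x)
    (ρ : ℝ) (hρ0 : 0 ≤ ρ)
    (hρ : ∀ u : S → ℝ, (∑ x, Real.sqrt (pi' x) * u x) = 0 →
      euclNorm ((symTrans P pi').mulVec u) ≤ ρ * euclNorm u)
    (t : ℕ) (ht : 1 ≤ t)
    (W : S → Matrix (Fin d) (Fin d) ℝ) :
    specNorm (∑ x, ∑ y, (((P ^ t) y x - pi' x) * pi' y) • (W x * (W y)ᵀ))
      ≤ ρ ^ t * specNorm (∑ x, pi' x • (W x * (W x)ᵀ)) := by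
  have hs : ∀ x, √(pi' x) ≠ 0 := fun x => (Real.sqrt_pos.2 (hpos x)).ne'
  have hs2 : ∀ x, √(pi' x) * √(pi' x) = pi' x := fun x => Real.mul_self_sqrt (hpos x).le
  set s : S → ℝ := fun x => √(pi' x) with hsdef
  set N := ∑ x, pi' x • (W x * (W x)ᵀ) with hN
  have hs1 : s ⬝ᵥ s = 1 := by simp [dotProduct, hsdef, hs2, hsum]
  have hTs : symTrans P pi' *ᵥ s = s := by
    ext x
    simp only [mulVec, dotProduct, symTrans, of_apply, hsdef, div_mul_cancel₀ _ (hs _)]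
    rw [← Finset.mul_sum, hP1, mul_one]
  have hstat : ∀ y, ∑ x, pi' x * P x y = pi' y := fun y => by
    simp_rw [hrev _ y, ← Finset.mul_sum, hP1, mul_one]
  have hsT : ∀ u, s ⬝ᵥ symTrans P pi' *ᵥ u = s ⬝ᵥ u := by
    intro u
    rw [dotProduct_mulVec]
    congr 1
    ext y
    simp only [vecMul, dotProduct, symTrans, of_apply, hsdef]
    simp_rw [← mul_div_assoc, ← mul_assoc, hs2]
    rw [← Finset.sum_div, hstat, div_eq_iff (hs y), hs2]
  have hN0 := specNorm_nonneg N
  refine specNorm_le_of_bilin _ _ (mul_nonneg (pow_nonneg hρ0 t) hN0) fun a v => ?_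
  rw [dot_corr P pi' hpos]
  set F := fun i => euclNorm (coordVec pi' W a i)
  set G := fun i => euclNorm (coordVec pi' W v i)
  have hF : euclNorm F ^ 2 ≤ specNorm N * euclNorm a ^ 2 := by
    refine le_trans (le_of_eq ?_) (dot_mulVec_le N a)
    rw [hN, ← dot_gram pi' hpos, euclNorm_sq]
    simp [dotProduct, F, sq]
  have hG : euclNorm G ^ 2 ≤ specNorm N * euclNorm v ^ 2 := by
    refine le_trans (le_of_eq ?_) (dot_mulVec_le N v)
    rw [hN, ← dot_gram pi' hpos, euclNorm_sq]
    simp [dotProduct, G, sq]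
  have hFG : euclNorm F * euclNorm G ≤ specNorm N * (euclNorm a * euclNorm v) := by
    refine le_of_sq_le_sq ?_
      (mul_nonneg hN0 (mul_nonneg (euclNorm_nonneg a) (euclNorm_nonneg v)))
    calc (euclNorm F * euclNorm G) ^ 2 = euclNorm F ^ 2 * euclNorm G ^ 2 := mul_pow _ _ _
      _ ≤ (specNorm N * euclNorm a ^ 2) * (specNorm N * euclNorm v ^ 2) :=
          mul_le_mul hF hG (sq_nonneg _) (mul_nonneg hN0 (sq_nonneg _))
      _ = _ := by ring
  calc _ ≤ ∑ i, ρ ^ t * (F i * G i) :=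
        Finset.sum_le_sum fun i _ => bilin_bound _ s ρ hρ0 hs1 hTs hsT hρ t _ _
    _ = ρ ^ t * (F ⬝ᵥ G) := by rw [← Finset.mul_sum]; rfl
    _ ≤ ρ ^ t * (specNorm N * (euclNorm a * euclNorm v)) :=
        mul_le_mul_of_nonneg_left ((dot_le_euclNorm F G).trans hFG) (pow_nonneg hρ0 t)
    _ = _ := by ring
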